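/- arXiv:2505.17868 — 3 statements merged into one kernel-verified Lean document; each statement's English description precedes it below -/
import Mathlib

section
/- Let k ≤ h and L be positive integers, let ε ≥ 0 and λ ≥ 0. Let Φ ∈ ℝ^{k×L} be a matrix, let α_1,…,α_h ∈ ℝ, and let μ ∈ ℝ^{h×L} be the matrix whose i-th row is μ_L(α_i). Let M ∈ ℝ^{h×k} be a matrix whose i-th row m_i satisfies ‖m_iᵀΦ − μ_L(α_i)‖₂ ≤ ε for every i = 1,…,h, and suppose there exists N ∈ ℝ^{k×h} with N·M = I_k and operator norm ‖N‖ ≤ λ. Then ‖Φ − N·μ‖_F ≤ λ·h·ε. -/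
/-- The impulse vector `μ_L(α) ∈ ℝ^L`, `μ_L(α)_i = (1−α)·α^(i−1)` (0-indexed here). -/
noncomputable def impulse (L : ℕ) (α : ℝ) : Fin L → ℝ := fun i => (1 - α) * α ^ (i : ℕ)

/-- Euclidean norm of a vector in `ℝ^L`. -/
noncomputable def vecNorm {L : ℕ} (v : Fin L → ℝ) : ℝ := Real.sqrt (∑ j, (v j) ^ 2)

/-- Frobenius norm of a matrix. -/
noncomputable def froNorm {k L : ℕ} (A : Matrix (Fin k) (Fin L) ℝ) : ℝ :=
  Real.sqrt (∑ i, ∑ j, (A i j) ^ 2)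

/-- ℓ2→ℓ2 operator norm of a matrix. -/
noncomputable def opNorm {k h : ℕ} (N : Matrix (Fin k) (Fin h) ℝ) : ℝ :=
  ‖LinearMap.toContinuousLinearMap (Matrix.toEuclideanLin N)‖

theorem stmt0 (k h L : ℕ) (hk : 0 < k) (hL : 0 < L) (hkh : k ≤ h)
    (ε lam : ℝ) (hε : 0 ≤ ε) (hlam : 0 ≤ lam)
    (Φ : Matrix (Fin k) (Fin L) ℝ) (α : Fin h → ℝ)
    (μ : Matrix (Fin h) (Fin L) ℝ) (hμ : ∀ i, μ i = impulse L (α i))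
    (M : Matrix (Fin h) (Fin k) ℝ)
    (hM : ∀ i : Fin h, vecNorm (fun j => (M * Φ) i j - μ i j) ≤ ε)
    (N : Matrix (Fin k) (Fin h) ℝ) (hNM : N * M = 1) (hN : opNorm N ≤ lam) :
    froNorm (Φ - N * μ) ≤ lam * h * ε := by
  have hE : Φ - N * μ = N * (M * Φ - μ) := by
    rw [Matrix.mul_sub, ← Matrix.mul_assoc, hNM, Matrix.one_mul]
  rw [hE]
  generalize hEd : M * Φ - μ = E
  have hrow : ∀ i, ∑ j, (E i j) ^ 2 ≤ ε ^ 2 := by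
    intro i
    have h1 := hM i
    unfold vecNorm at h1
    rw [Real.sqrt_le_left hε] at h1
    rw [← hEd]
    simpa using h1
  have hcol : ∀ j, ∑ i, ((N * E) i j) ^ 2 ≤ lam ^ 2 * ∑ i, (E i j) ^ 2 := by
    intro j
    have h1 := (LinearMap.toContinuousLinearMap (Matrix.toEuclideanLin N)).le_of_opNorm_le hN
      (WithLp.toLp 2 (fun i => E i j))
    have h2 := pow_le_pow_left₀ (norm_nonneg _) h1 2
    rw [mul_pow, EuclideanSpace.norm_sq_eq, EuclideanSpace.norm_sq_eq] at h2
    simpa [Matrix.mul_apply, Matrix.mulVec, dotProduct] using h2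
  unfold froNorm
  apply Real.sqrt_le_iff.mpr
  refine ⟨by positivity, ?_⟩
  have hh : (1 : ℝ) ≤ h := by exact_mod_cast (by omega : 1 ≤ h)
  calc ∑ i, ∑ j, ((N * E) i j) ^ 2 = ∑ j, ∑ i, ((N * E) i j) ^ 2 := Finset.sum_comm
    _ ≤ ∑ j, lam ^ 2 * ∑ i, (E i j) ^ 2 := Finset.sum_le_sum fun j _ => hcol j
    _ = lam ^ 2 * ∑ i, ∑ j, (E i j) ^ 2 := by rw [← Finset.mul_sum, Finset.sum_comm]
    _ ≤ lam ^ 2 * ∑ _i : Fin h, ε ^ 2 := by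
        gcongr with i _
        exact hrow i
    _ = (lam * ε) ^ 2 * h := by simp; ring
    _ ≤ (lam * ε) ^ 2 * (h : ℝ) ^ 2 := by
        gcongr
        nlinarith
    _ = (lam * h * ε) ^ 2 := by ring
end

section
/- There exists a universal constant c > 0 such that for all integers L ≥ 2 and 1 ≤ k ≤ L, and for every α ∈ [0,1], there exist real coefficients m_1,…,m_k such that ‖Σ_{i=1}^k m_i·φ_i − μ_L(α)‖₂ ≤ c·e^{−k/log L}, where φ_1,…,φ_k are the spectral filters of length L. -/
/-- The Hankel matrix `Z_L` with entries `(Z_L)_{ij} = 2/((i+j)^3 − (i+j))` (1-indexed). -/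
noncomputable def hankel (L : ℕ) : Matrix (Fin L) (Fin L) ℝ :=
  fun i j => 2 / ((((i : ℕ) + (j : ℕ) + 2 : ℕ) : ℝ) ^ 3 - (((i : ℕ) + (j : ℕ) + 2 : ℕ) : ℝ))

lemma contr (a : ℝ) (ha : a ^ 2 < 1) (x y w : ℕ → ℝ) (hw0 : w 0 = 0)
    (hw : ∀ i, w (i + 1) = a * w i + (1 - a ^ 2) * x i)
    (hy : ∀ i, y i = w i - a * x i) (n : ℕ) :
    ∑ i ∈ Finset.range n, y i ^ 2 + w n ^ 2 / (1 - a ^ 2) = ∑ i ∈ Finset.range n, x i ^ 2 := by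
  have h1 : (1 - a ^ 2) ≠ 0 := by linarith
  induction n with
  | zero => simp [hw0]
  | succ n ih =>
    rw [Finset.sum_range_succ, Finset.sum_range_succ, ← ih, hw, hy]
    field_simp
    ring

lemma contr_le (a : ℝ) (ha : a ^ 2 < 1) (x y w : ℕ → ℝ) (hw0 : w 0 = 0)
    (hw : ∀ i, w (i + 1) = a * w i + (1 - a ^ 2) * x i)
    (hy : ∀ i, y i = w i - a * x i) (n : ℕ) :
    ∑ i ∈ Finset.range n, y i ^ 2 ≤ ∑ i ∈ Finset.range n, x i ^ 2 := by
  have h1 : 0 < (1 - a ^ 2) := by linarith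
  have := contr a ha x y w hw0 hw hy n
  have h2 : 0 ≤ w n ^ 2 / (1 - a ^ 2) := by positivity
  linarith

lemma geom_le_aux (t : ℝ) (h0 : 0 ≤ t) (h1 : t < 1) (n : ℕ) :
    ∑ i ∈ Finset.range n, t ^ i ≤ 1 / (1 - t) := by
  rw [geom_sum_eq h1.ne, le_div_iff₀ (by linarith), div_mul_eq_mul_div, div_le_iff_of_neg (by linarith)]
  have := pow_nonneg h0 n
  nlinarith

/-- Blaschke product bound for the approximation of Szegő kernels. -/
lemma blaschke (b : ℕ → ℝ) (hb : ∀ j, b j ^ 2 < 1) (hinj : Function.Injective b)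
    (β : ℝ) (hβ : β ^ 2 < 1) (k : ℕ) :
    ∃ c : ℕ → ℝ, ∀ n, ∑ i ∈ Finset.range n, (β ^ i - ∑ j ∈ Finset.range k, c j * b j ^ i) ^ 2
      ≤ (∏ j ∈ Finset.range k, (β - b j) / (1 - b j * β)) ^ 2 * (1 / (1 - β ^ 2)) := by
  induction k with
  | zero =>
    refine ⟨0, fun n => ?_⟩
    simp only [Finset.range_zero, Finset.sum_empty, sub_zero, Finset.prod_empty, one_pow, one_mul]
    have := geom_le_aux (β ^ 2) (sq_nonneg _) hβ n
    simpa [← pow_mul, mul_comm] using this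
  | succ k ih =>
    obtain ⟨c, hc⟩ := ih
    set a := b k with hadef
    have ha : a ^ 2 < 1 := hb k
    have key : ∀ t : ℝ, t ^ 2 < 1 → 1 - a * t ≠ 0 := by
      intro t ht h
      nlinarith [sq_nonneg (a - t)]
    have hβ1 := key β hβ
    set φ := (β - a) / (1 - a * β) with hφ
    set x : ℕ → ℝ := fun i => φ * (β ^ i - ∑ j ∈ Finset.range k, c j * b j ^ i) with hx
    set w : ℕ → ℝ := fun i => (1 - a ^ 2) / (1 - a * β) * (β ^ i - a ^ i)
      - φ * ∑ j ∈ Finset.range k, c j * ((1 - a ^ 2) / (b j - a) * (b j ^ i - a ^ i)) with hw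
    set y : ℕ → ℝ := fun i => w i - a * x i with hy
    set C := (1 - a ^ 2) / (1 - a * β) - φ * ∑ j ∈ Finset.range k, c j * ((1 - a ^ 2) / (b j - a))
      with hC
    have hne : ∀ j ∈ Finset.range k, b j - a ≠ 0 := by
      intro j hj h
      have := hinj (sub_eq_zero.mp h)
      simp at hj
      omega
    have hle := contr_le a ha x y w (by simp [hw]) (by
      intro i
      simp only [hw, hx]
      have : ∑ j ∈ Finset.range k, c j * ((1 - a ^ 2) / (b j - a) * (b j ^ (i+1) - a ^ (i+1)))
          = a * ∑ j ∈ Finset.range k, c j * ((1 - a ^ 2) / (b j - a) * (b j ^ i - a ^ i))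
            + (1 - a ^ 2) * ∑ j ∈ Finset.range k, c j * b j ^ i := by
        rw [Finset.mul_sum, Finset.mul_sum, ← Finset.sum_add_distrib]
        refine Finset.sum_congr rfl fun j hj => ?_
        have := hne j hj
        field_simp
        ring
      rw [this]
      have h2 : (1 - a ^ 2) / (1 - a * β) * (β ^ (i+1) - a ^ (i+1)) =
        a * ((1 - a ^ 2) / (1 - a * β) * (β ^ i - a ^ i)) + (1 - a ^ 2) * (φ * β ^ i) := by
        rw [hφ]; field_simp; ring
      rw [h2]; ring) (fun i => rfl)
    refine ⟨fun j => if j = k then C else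
      φ * (c j * ((1 - a ^ 2) / (b j - a))) - a * (φ * c j), fun n => ?_⟩
    have hyy : ∀ i, β ^ i - ∑ j ∈ Finset.range (k + 1), (if j = k then C else
      φ * (c j * ((1 - a ^ 2) / (b j - a))) - a * (φ * c j)) * b j ^ i = y i := by
      intro i
      rw [Finset.sum_range_succ]
      have : ∑ j ∈ Finset.range k, (if j = k then C else
        φ * (c j * ((1 - a ^ 2) / (b j - a))) - a * (φ * c j)) * b j ^ i
        = φ * ∑ j ∈ Finset.range k, c j * ((1 - a ^ 2) / (b j - a) * b j ^ i)
          - a * (φ * ∑ j ∈ Finset.range k, c j * b j ^ i) := by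
        simp only [Finset.mul_sum, ← Finset.sum_sub_distrib]
        refine Finset.sum_congr rfl fun j hj => ?_
        rw [if_neg (by simp at hj; omega)]
        ring
      rw [this]
      simp only [if_true, hy, hw, hx, hC, mul_sub, Finset.sum_sub_distrib]
      have h3 : ∑ j ∈ Finset.range k, c j * ((1 - a ^ 2) / (b j - a) * a ^ i) =
        (∑ j ∈ Finset.range k, c j * ((1 - a ^ 2) / (b j - a))) * a ^ i := by
        rw [Finset.sum_mul]; exact Finset.sum_congr rfl fun j _ => by ring
      rw [h3]
      have h4 : β ^ i = (1 - a ^ 2) / (1 - a * β) * β ^ i - a * (φ * β ^ i) := by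
        rw [hφ]; field_simp; ring
      rw [← hadef]
      linear_combination h4
    simp only [hyy]
    refine (hle n).trans ?_
    simp only [hx, mul_pow, ← Finset.mul_sum]
    rw [Finset.prod_range_succ, mul_pow]
    have := mul_le_mul_of_nonneg_left (hc n) (sq_nonneg φ)
    rw [← hadef, ← hφ]
    linarith

lemma ratio_le (u : ℝ) (h0 : 0 ≤ u) (h1 : u ≤ 1) : (1 - u) / (1 + u) ≤ Real.exp (-2 * u) := by
  -- (1-u) e^{u} ≤ (1+u) e^{-u}
  rw [div_le_iff₀ (by linarith)]
  by_cases h : u = 1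
  · subst h; simp; positivity
  have hu : u < 1 := lt_of_le_of_ne h1 h
  have hs := Real.sum_range_le_log_div h0 hu 1
  simp only [Finset.sum_range_one, mul_zero, zero_add, pow_one] at hs
  norm_num at hs
  have h3 : 0 < (1 + u) / (1 - u) := div_pos (by linarith) (by linarith)
  have h4 : Real.exp (2 * u) ≤ (1 + u) / (1 - u) := by
    rw [← Real.le_log_iff_exp_le h3]; linarith
  rw [le_div_iff₀ (by linarith)] at h4
  have h5 : Real.exp (-2 * u) * Real.exp (2 * u) = 1 := by rw [← Real.exp_add]; simp
  have h6 := mul_le_mul_of_nonneg_left h4 (Real.exp_pos (-2 * u)).le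
  nlinarith

lemma node_step (t s η : ℝ) (hη : 0 < η) (G : ℝ → ℝ)
    (hG : G = fun s => if s ≤ t then Real.exp (s - t) else 2 - Real.exp (t - s)) :
    G (s + η) - G s ≤ η * Real.exp η * Real.exp (-|t - s|) := by
  have e1 : Real.exp η - 1 ≤ η * Real.exp η := by
    have h := Real.add_one_le_exp (-η)
    have : Real.exp (-η) * Real.exp η = 1 := by rw [← Real.exp_add]; simp
    nlinarith [Real.exp_pos η]
  have e2 : 1 ≤ Real.exp η := Real.one_le_exp hη.le
  subst hG
  simp only
  by_cases h1 : s + η ≤ t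
  · have h2 : s ≤ t := by linarith
    rw [if_pos h1, if_pos h2, abs_of_nonneg (by linarith)]
    have : Real.exp (s + η - t) = Real.exp η * Real.exp (s - t) := by
      rw [← Real.exp_add]; ring_nf
    rw [this, neg_sub]
    nlinarith [Real.exp_pos (s - t)]
  · push Not at h1
    rw [if_neg (by linarith)]
    by_cases h2 : s ≤ t
    · rw [if_pos h2, abs_of_nonneg (by linarith), mul_assoc, ← Real.exp_add]
      have h3 := Real.add_one_le_exp (t - (s + η))
      have h4 := Real.add_one_le_exp (s - t)
      have h5 : 1 ≤ Real.exp (η + -(t - s)) := Real.one_le_exp (by linarith)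
      nlinarith
    · rw [if_neg h2, abs_of_neg (by linarith)]
      push Not at h2
      have : Real.exp (t - (s + η)) = Real.exp (-η) * Real.exp (t - s) := by
        rw [← Real.exp_add]; ring_nf
      rw [this, neg_neg]
      have h := Real.add_one_le_exp (-η)
      have p := Real.exp_pos (t - s)
      nlinarith [mul_le_mul_of_nonneg_right h p.le, mul_le_mul_of_nonneg_right e2 (mul_pos hη p).le]

lemma node_sum (t W M : ℝ) (hM : 0 ≤ M) (ht0 : 0 ≤ t) (htW : t ≤ W - 2 * M) (hW : 0 < W)
    (k : ℕ) (hk : 1 ≤ k) :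
    2 * (1 - Real.exp (-M)) * (k / W - 1) ≤
      ∑ j ∈ Finset.range k, Real.exp (-|t - (-M + j * (W / k))|) := by
  have hk' : (0:ℝ) < k := by exact_mod_cast hk
  set η := W / k with hη
  have hη0 : 0 < η := by positivity
  set G : ℝ → ℝ := fun s => if s ≤ t then Real.exp (s - t) else 2 - Real.exp (t - s) with hG
  have h1 : ∑ j ∈ Finset.range k, (G (-M + ((j + 1 : ℕ):ℝ) * η) - G (-M + (j:ℝ) * η)) ≤
      ∑ j ∈ Finset.range k, η * Real.exp η * Real.exp (-|t - (-M + j * η)|) := by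
    refine Finset.sum_le_sum fun j _ => ?_
    have := node_step t (-M + j * η) η hη0 G hG
    have e : -M + ((j + 1 : ℕ):ℝ) * η = -M + j * η + η := by push_cast; ring
    rw [e]; exact this
  rw [Finset.sum_range_sub (fun j : ℕ => G (-M + (j:ℝ) * η)), ← Finset.mul_sum] at h1
  have hkη : (k:ℝ) * η = W := by rw [hη]; field_simp
  rw [hkη] at h1
  have hG0 : G (-M + ((0:ℕ):ℝ) * η) ≤ Real.exp (-M) := by
    simp only [hG]
    rw [if_pos (by simp; linarith)]
    exact Real.exp_le_exp.mpr (by simp; linarith)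
  have hG1 : 2 - Real.exp (-M) ≤ G (-M + W) := by
    simp only [hG]
    split_ifs with h
    · have : M = 0 := by linarith
      have h2 : t = W := by linarith
      subst h2; rw [this]; norm_num
    · have := Real.exp_le_exp.mpr (show t - (-M + W) ≤ -M by linarith)
      linarith
  set S := ∑ j ∈ Finset.range k, Real.exp (-|t - (-M + j * η)|)
  have h2 : 2 * (1 - Real.exp (-M)) ≤ η * Real.exp η * S := by linarith
  have h3 : (k:ℝ) / W = 1 / η := by rw [hη]; field_simp
  rw [h3]
  have h4 : (1 / η - 1) ≤ Real.exp (-η) / η := by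
    rw [le_div_iff₀ hη0, sub_mul, div_mul_cancel₀ _ hη0.ne']
    linarith [Real.add_one_le_exp (-η)]
  have h5 : 0 ≤ 1 - Real.exp (-M) := by
    have : Real.exp (-M) ≤ 1 := Real.exp_le_one_iff.mpr (by linarith)
    linarith
  calc 2 * (1 - Real.exp (-M)) * (1 / η - 1) ≤ 2 * (1 - Real.exp (-M)) * (Real.exp (-η) / η) := by gcongr
    _ ≤ (η * Real.exp η * S) * (Real.exp (-η) / η) := by gcongr
    _ = S * (Real.exp η * Real.exp (-η)) := by field_simp
    _ = S := by rw [← Real.exp_add]; simp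

lemma ph_aux (t s : ℝ) (hst : s ≤ t) :
    |((1 - Real.exp (-t)) / (1 + Real.exp (-t)) - (1 - Real.exp (-s)) / (1 + Real.exp (-s))) /
      (1 - (1 - Real.exp (-s)) / (1 + Real.exp (-s)) * ((1 - Real.exp (-t)) / (1 + Real.exp (-t))))|
      ≤ Real.exp (-2 * Real.exp (-|t - s|)) ∧
    |((1 - Real.exp (-s)) / (1 + Real.exp (-s)) - (1 - Real.exp (-t)) / (1 + Real.exp (-t))) /
      (1 - (1 - Real.exp (-t)) / (1 + Real.exp (-t)) * ((1 - Real.exp (-s)) / (1 + Real.exp (-s))))|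
      ≤ Real.exp (-2 * Real.exp (-|t - s|)) := by
  have hy := Real.exp_pos (-t)
  have hu : Real.exp (-t) = Real.exp (-|t - s|) * Real.exp (-s) := by
    rw [abs_of_nonneg (by linarith), ← Real.exp_add]; ring_nf
  set u := Real.exp (-|t - s|) with hudef
  have hu0 : 0 < u := Real.exp_pos _
  have hu1 : u ≤ 1 := Real.exp_le_one_iff.mpr (by simp)
  have hz := Real.exp_pos (-s)
  set z := Real.exp (-s)
  rw [hu]
  have e : (1 - (1 - z) / (1 + z) * ((1 - u * z) / (1 + u * z))) =
     2 * z * (1 + u) / ((1 + z) * (1 + u * z)) := by field_simp; ring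
  have e1 : ((1 - u * z) / (1 + u * z) - (1 - z) / (1 + z)) /
      (1 - (1 - z) / (1 + z) * ((1 - u * z) / (1 + u * z))) = (1 - u) / (1 + u) := by
    rw [e]; field_simp; ring
  have e2 : ((1 - z) / (1 + z) - (1 - u * z) / (1 + u * z)) /
      (1 - (1 - u * z) / (1 + u * z) * ((1 - z) / (1 + z))) = - ((1 - u) / (1 + u)) := by
    rw [mul_comm ((1 - u * z) / (1 + u * z)), ← e1, ← neg_div]; ring
  rw [e1, e2, abs_neg]
  have h := ratio_le u hu0.le hu1
  have h' : 0 ≤ (1 - u) / (1 + u) := div_nonneg (by linarith) (by linarith)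
  rw [abs_of_nonneg h']
  exact ⟨h, h⟩

lemma ph_le (t s : ℝ) :
    |((1 - Real.exp (-t)) / (1 + Real.exp (-t)) - (1 - Real.exp (-s)) / (1 + Real.exp (-s))) /
      (1 - (1 - Real.exp (-s)) / (1 + Real.exp (-s)) * ((1 - Real.exp (-t)) / (1 + Real.exp (-t))))|
      ≤ Real.exp (-2 * Real.exp (-|t - s|)) := by
  rcases le_total s t with h | h
  · exact (ph_aux t s h).1
  · rw [abs_sub_comm t s]; exact (ph_aux s t h).2

lemma cayley_sq (t : ℝ) : ((1 - Real.exp (-t)) / (1 + Real.exp (-t))) ^ 2 < 1 := by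
  have := Real.exp_pos (-t)
  rw [div_pow, div_lt_one (by positivity)]
  nlinarith

lemma log_num (L : ℕ) (hL : 2000 ≤ L) :
    Real.log (2 * L + 1) + 2 * Real.log 4 ≤ 3 / 2 * Real.log L := by
  have hL' : (2000:ℝ) ≤ L := by exact_mod_cast hL
  have h1 : 2 * (Real.log (2 * L + 1) + 2 * Real.log 4) = Real.log ((2 * L + 1) ^ 2 * 4 ^ 4) := by
    rw [Real.log_mul (by positivity) (by norm_num), Real.log_pow, Real.log_pow]; push_cast; ring
  have h2 : 3 * Real.log L = Real.log ((L:ℝ) ^ 3) := by rw [Real.log_pow]; push_cast; ring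
  have h3 : Real.log (((2:ℝ) * L + 1) ^ 2 * 4 ^ 4) ≤ Real.log ((L:ℝ) ^ 3) := by
    apply Real.log_le_log (by positivity)
    nlinarith [mul_nonneg (sub_nonneg.mpr hL') (sq_nonneg (L:ℝ))]
  linarith

set_option maxHeartbeats 2000000 in
lemma approx (L k : ℕ) (hL : 2000 ≤ L) (hk : 1 ≤ k) :
    ∃ u : ℕ → Fin L → ℝ, ∀ α ∈ Set.Icc (0:ℝ) 1, ∃ c : ℕ → ℝ,
      ∑ i, (impulse L α i - ∑ j ∈ Finset.range k, c j * u j i) ^ 2 ≤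
        (Real.exp 4 * Real.exp (-2 * k / Real.log L)) ^ 2 := by
  have hL' : (2000:ℝ) ≤ L := by exact_mod_cast hL
  have hk' : (1:ℝ) ≤ k := by exact_mod_cast hk
  set R : ℝ := 1 + 1 / L with hR
  have hR1 : 1 < R := by rw [hR]; have : 0 < 1 / (L:ℝ) := by positivity
                         linarith
  have hRL : R ^ L ≤ Real.exp 1 := by
    have h : R ≤ Real.exp (1 / L) := by rw [hR, add_comm]; exact Real.add_one_le_exp _
    calc R ^ L ≤ Real.exp (1 / L) ^ L := by gcongr
      _ = Real.exp 1 := by rw [← Real.exp_nat_mul]; congr 1; field_simp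
  set M := Real.log 4 with hM
  have hM0 : 0 < M := Real.log_pos (by norm_num)
  have hT0 : 0 < Real.log (2 * L + 1) := Real.log_pos (by linarith)
  set W := Real.log (2 * L + 1) + 2 * M with hW
  have hW0 : 0 < W := by positivity
  have hlogL : 0 < Real.log L := Real.log_pos (by linarith)
  have hnum : W ≤ 3 / 2 * Real.log L := log_num L hL
  set s : ℕ → ℝ := fun j => -M + j * (W / k) with hs
  set b : ℕ → ℝ := fun j => (1 - Real.exp (-s j)) / (1 + Real.exp (-s j)) with hb
  have hinj : Function.Injective b := by
    intro i j hij
    simp only [hb] at hij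
    have p1 := Real.exp_pos (-s i)
    have p2 := Real.exp_pos (-s j)
    rw [div_eq_div_iff (by positivity) (by positivity)] at hij
    have h1 : Real.exp (-s i) = Real.exp (-s j) := by linarith
    have h2 := Real.exp_injective h1
    simp only [hs] at h2
    have h3 : 0 < W / k := by positivity
    have h4 : (i:ℝ) = j := mul_right_cancel₀ h3.ne' (by linarith)
    exact_mod_cast h4
  refine ⟨fun j i => R ^ (i:ℕ) * b j ^ (i:ℕ), ?_⟩
  rintro α ⟨hα0, hα1⟩
  set β := α / R with hβdef
  have hβ0 : 0 ≤ β := by positivity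
  have hβR : β * R = α := by rw [hβdef]; field_simp
  have hβ1 : β ≤ L / (L + 1) := by
    rw [hβdef, hR, div_le_div_iff₀ (by positivity) (by positivity)]
    have : (L:ℝ) * (1 + 1 / L) = L + 1 := by field_simp
    nlinarith
  have hβlt : β < 1 := lt_of_le_of_lt hβ1 (by rw [div_lt_one (by linarith)]; linarith)
  set y := (1 - β) / (1 + β) with hy
  have hy0 : 0 < y := div_pos (by linarith) (by linarith)
  have hy1 : y ≤ 1 := by rw [hy, div_le_one (by linarith)]; linarith
  have hyL : 1 / (2 * L + 1) ≤ y := by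
    rw [hy, div_le_div_iff₀ (by linarith) (by linarith)]
    rw [le_div_iff₀ (by linarith)] at hβ1
    nlinarith
  set t := -Real.log y with ht
  have hty : Real.exp (-t) = y := by rw [ht, neg_neg, Real.exp_log hy0]
  have ht0 : 0 ≤ t := by have := Real.log_nonpos hy0.le hy1; linarith
  have ht1 : t ≤ W - 2 * M := by
    have := Real.log_le_log (by positivity) hyL
    rw [one_div, Real.log_inv] at this
    linarith
  have hβt : β = (1 - Real.exp (-t)) / (1 + Real.exp (-t)) := by
    rw [hty, hy]
    have : 1 + β ≠ 0 := by linarith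
    field_simp; ring
  have hsum := node_sum t W M hM0.le ht0 ht1 hW0 k hk
  have heM : Real.exp (-M) = 1 / 4 := by rw [hM, Real.exp_neg, Real.exp_log (by norm_num)]; norm_num
  rw [heM] at hsum
  obtain ⟨c, hc⟩ := blaschke b (fun j => cayley_sq (s j)) hinj β (by nlinarith) k
  set B := ∏ j ∈ Finset.range k, (β - b j) / (1 - b j * β) with hB
  have hBle : |B| ≤ Real.exp 3 * Real.exp (-2 * k / Real.log L) := by
    rw [hB, Finset.abs_prod]
    calc ∏ j ∈ Finset.range k, |(β - b j) / (1 - b j * β)|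
        ≤ ∏ j ∈ Finset.range k, Real.exp (-2 * Real.exp (-|t - s j|)) := by
          refine Finset.prod_le_prod (fun _ _ => abs_nonneg _) fun j _ => ?_
          rw [hβt]; exact ph_le t (s j)
      _ = Real.exp (-2 * ∑ j ∈ Finset.range k, Real.exp (-|t - s j|)) := by
          rw [← Real.exp_sum, Finset.mul_sum]
      _ ≤ Real.exp (3 + -2 * k / Real.log L) := by
          apply Real.exp_le_exp.mpr
          have h1 : 2 * k / Real.log L ≤ 3 * (k / W) := by
            rw [← mul_div_assoc, div_le_div_iff₀ hlogL hW0]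
            nlinarith
          have h2 : -2 * (k:ℝ) / Real.log L = -(2 * k / Real.log L) := by ring
          rw [h2]
          linarith
      _ = _ := Real.exp_add _ _
  refine ⟨fun j => (1 - α) * c j, ?_⟩
  have hterm : ∀ i : Fin L, (impulse L α i - ∑ j ∈ Finset.range k,
      (1 - α) * c j * (R ^ (i:ℕ) * b j ^ (i:ℕ))) ^ 2 ≤
      (Real.exp 1 * (1 - β)) ^ 2 * (β ^ (i:ℕ) - ∑ j ∈ Finset.range k, c j * b j ^ (i:ℕ)) ^ 2 := by
    intro i
    have e : impulse L α i - ∑ j ∈ Finset.range k,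
      (1 - α) * c j * (R ^ (i:ℕ) * b j ^ (i:ℕ)) = (R ^ (i:ℕ) * (1 - α)) *
        (β ^ (i:ℕ) - ∑ j ∈ Finset.range k, c j * b j ^ (i:ℕ)) := by
      rw [mul_sub, Finset.mul_sum]
      congr 1
      · rw [impulse, ← hβR, mul_pow]; ring
      · exact Finset.sum_congr rfl fun j _ => by ring
    rw [e, mul_pow]
    have h1 : R ^ (i:ℕ) ≤ Real.exp 1 := (pow_le_pow_right₀ hR1.le i.2.le).trans hRL
    have h2 : 1 - α ≤ 1 - β := by nlinarith
    have h3 : 0 ≤ 1 - α := by linarith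
    gcongr
  have hβsq : 0 < 1 - β ^ 2 := by nlinarith
  calc _ ≤ ∑ i : Fin L, (Real.exp 1 * (1 - β)) ^ 2 *
        (β ^ (i:ℕ) - ∑ j ∈ Finset.range k, c j * b j ^ (i:ℕ)) ^ 2 :=
        Finset.sum_le_sum fun i _ => hterm i
    _ = (Real.exp 1 * (1 - β)) ^ 2 * ∑ i ∈ Finset.range L,
        (β ^ i - ∑ j ∈ Finset.range k, c j * b j ^ i) ^ 2 := by
        rw [← Finset.mul_sum, Finset.sum_range]
    _ ≤ (Real.exp 1 * (1 - β)) ^ 2 * (B ^ 2 * (1 / (1 - β ^ 2))) := by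
        gcongr; exact hc L
    _ = Real.exp 1 ^ 2 * |B| ^ 2 * ((1 - β) ^ 2 / (1 - β ^ 2)) := by rw [sq_abs]; ring
    _ ≤ Real.exp 1 ^ 2 * |B| ^ 2 * 1 := by
        gcongr
        rw [div_le_one hβsq]; nlinarith
    _ ≤ Real.exp 1 ^ 2 * (Real.exp 3 * Real.exp (-2 * k / Real.log L)) ^ 2 * 1 := by gcongr
    _ = (Real.exp (1 + 3) * Real.exp (-2 * k / Real.log L)) ^ 2 := by rw [Real.exp_add]; ring
    _ = _ := by norm_num

lemma hankel_quad (L : ℕ) (x : Fin L → ℝ) :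
    ∑ i, x i * (hankel L).mulVec x i = ∫ a in (0:ℝ)..1, (∑ i, x i * impulse L a i) ^ 2 := by
  have h1 : ∀ a : ℝ, (∑ i, x i * impulse L a i) ^ 2 =
      ∑ i, ∑ j, (x i * x j) * ((1 - a) ^ 2 * a ^ ((i:ℕ) + (j:ℕ))) := by
    intro a
    rw [sq, Finset.sum_mul_sum]
    refine Finset.sum_congr rfl fun i _ => Finset.sum_congr rfl fun j _ => ?_
    simp only [impulse]; rw [pow_add]; ring
  have h2 : ∀ n : ℕ, ∫ a in (0:ℝ)..1, (1 - a) ^ 2 * a ^ n =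
      2 / (((n + 2 : ℕ) : ℝ) ^ 3 - ((n + 2 : ℕ) : ℝ)) := by
    intro n
    have : ∀ a : ℝ, (1 - a) ^ 2 * a ^ n = a ^ n - 2 * a ^ (n + 1) + a ^ (n + 2) := by
      intro a; ring
    simp only [this]
    rw [intervalIntegral.integral_add (by apply Continuous.intervalIntegrable; fun_prop)
      (by apply Continuous.intervalIntegrable; fun_prop),
      intervalIntegral.integral_sub (by apply Continuous.intervalIntegrable; fun_prop)
      (by apply Continuous.intervalIntegrable; fun_prop), intervalIntegral.integral_const_mul,
      integral_pow, integral_pow, integral_pow]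
    push_cast
    have p : ((n:ℝ) + 2) ^ 3 - (n + 2) = (n + 1) * (n + 2) * (n + 3) := by ring
    rw [p]
    have h0 : (n:ℝ) + 1 ≠ 0 := by positivity
    have h1 : (n:ℝ) + 2 ≠ 0 := by positivity
    have h3 : (n:ℝ) + 3 ≠ 0 := by positivity
    have h4 : (n:ℝ) + 1 + 1 ≠ 0 := by positivity
    have h5 : (n:ℝ) + 2 + 1 ≠ 0 := by positivity
    simp
    field_simp
    ring
  simp only [h1]
  rw [intervalIntegral.integral_finsetSum
    (fun i _ => by apply Continuous.intervalIntegrable; fun_prop)]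
  refine Finset.sum_congr rfl fun i _ => ?_
  rw [intervalIntegral.integral_finsetSum
    (fun i _ => by apply Continuous.intervalIntegrable; fun_prop)]
  rw [Matrix.mulVec, dotProduct, Finset.mul_sum]
  refine Finset.sum_congr rfl fun j _ => ?_
  rw [intervalIntegral.integral_const_mul, h2, hankel]
  ring

lemma sq_geom_bound (a : ℝ) (h0 : 0 ≤ a) (h1 : a ≤ 1) (n : ℕ) :
    (1 - a) ^ 3 * ∑ i ∈ Finset.range n, ((i:ℝ) * a ^ (i - 1)) ^ 2 ≤ 2 := by
  rcases h1.eq_or_lt with rfl | h1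
  · simp
  have hs := hasSum_choose_mul_geometric_of_norm_lt_one (𝕜 := ℝ) 2 (r := a)
    (by rw [Real.norm_eq_abs, abs_of_nonneg h0]; exact h1)
  have hle : ∑ i ∈ Finset.range n, (((i + 2).choose 2 : ℕ) : ℝ) * a ^ i ≤ 1 / (1 - a) ^ (2 + 1) :=
    sum_le_hasSum _ (fun i _ => by positivity) hs
  have hb : ∑ i ∈ Finset.range n, ((i:ℝ) * a ^ (i - 1)) ^ 2 ≤
      2 * ∑ i ∈ Finset.range n, (((i + 2).choose 2 : ℕ) : ℝ) * a ^ i := by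
    cases n with
    | zero => simp
    | succ n =>
      rw [Finset.sum_range_succ']
      simp only [Nat.cast_zero, zero_mul, add_tsub_cancel_right]
      have : ∑ i ∈ Finset.range n, (((i + 2).choose 2 : ℕ) : ℝ) * a ^ i ≤
        ∑ i ∈ Finset.range (n + 1), (((i + 2).choose 2 : ℕ) : ℝ) * a ^ i := by
        rw [Finset.sum_range_succ]
        have : 0 ≤ (((n + 2).choose 2 : ℕ) : ℝ) * a ^ n := by positivity
        linarith
      refine le_trans ?_ (mul_le_mul_of_nonneg_left this (by norm_num))
      rw [Finset.mul_sum]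
      simp only [ne_eq, OfNat.ofNat_ne_zero, not_false_eq_true, zero_pow, add_zero]
      refine Finset.sum_le_sum fun i _ => ?_
      have hc : (((i + 2).choose 2 : ℕ) : ℝ) = (i + 2) * (i + 1) / 2 := by
        rw [Nat.cast_choose_two]; push_cast; ring
      rw [hc, mul_pow]
      have h3 : (a ^ i) ^ 2 ≤ a ^ i := by
        have p0 := pow_nonneg h0 i
        have p1 := pow_le_one₀ (n := i) h0 h1.le
        nlinarith
      push_cast
      have hi : (0:ℝ) ≤ i := by positivity
      calc ((i:ℝ) + 1) ^ 2 * (a ^ i) ^ 2 ≤ ((i:ℝ) + 1) ^ 2 * a ^ i := by gcongr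
        _ ≤ ((i + 2) * (i + 1)) * a ^ i := by gcongr; nlinarith
        _ = _ := by ring
  have hpos : 0 < (1 - a) ^ 3 := by have : 0 < 1 - a := by linarith
                                    positivity
  calc _ ≤ (1 - a) ^ 3 * (2 * (1 / (1 - a) ^ (2 + 1))) := by
        gcongr; exact hb.trans (by gcongr)
    _ = 2 := by field_simp

lemma sq_geom_bound' (a : ℝ) (h0 : 0 ≤ a) (h1 : a ≤ 1) (n : ℕ) :
    (1 - a) * ∑ i ∈ Finset.range n, (a ^ i) ^ 2 ≤ 1 := by
  rcases h1.eq_or_lt with rfl | h1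
  · simp
  have := geom_le_aux a h0 h1 n
  rw [le_div_iff₀ (by linarith)] at this
  have h2 : ∑ i ∈ Finset.range n, (a ^ i) ^ 2 ≤ ∑ i ∈ Finset.range n, a ^ i := by
    refine Finset.sum_le_sum fun i _ => ?_
    have p0 := pow_nonneg h0 i
    have p1 := pow_le_one₀ (n := i) h0 h1.le
    nlinarith
  nlinarith

lemma p_bound (L : ℕ) (x : Fin L → ℝ) (a : ℝ) (h0 : 0 ≤ a) (h1 : a ≤ 1) :
    (1 - a) * (∑ i, x i * a ^ (i:ℕ)) ^ 2 ≤ ∑ i, x i ^ 2 := by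
  have cs := Finset.sum_mul_sq_le_sq_mul_sq Finset.univ x (fun i : Fin L => a ^ (i:ℕ))
  have h := sq_geom_bound' a h0 h1 L
  rw [Finset.sum_range] at h
  have hN : 0 ≤ ∑ i, x i ^ 2 := Finset.sum_nonneg fun i _ => sq_nonneg _
  have h2 := mul_le_mul_of_nonneg_left cs (show 0 ≤ 1 - a by linarith)
  have h3 := mul_le_mul_of_nonneg_left h hN
  linarith

lemma dp_bound (L : ℕ) (x : Fin L → ℝ) (a : ℝ) (h0 : 0 ≤ a) (h1 : a ≤ 1) :
    (1 - a) ^ 3 * (∑ i, x i * (((i:ℕ):ℝ) * a ^ ((i:ℕ) - 1))) ^ 2 ≤ 2 * ∑ i, x i ^ 2 := by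
  have cs := Finset.sum_mul_sq_le_sq_mul_sq Finset.univ x
    (fun i : Fin L => (((i:ℕ):ℝ) * a ^ ((i:ℕ) - 1)))
  have h := sq_geom_bound a h0 h1 L
  rw [Finset.sum_range] at h
  have hN : 0 ≤ ∑ i, x i ^ 2 := Finset.sum_nonneg fun i _ => sq_nonneg _
  have h2 := mul_le_mul_of_nonneg_left cs (pow_nonneg (show 0 ≤ 1 - a by linarith) 3)
  have h3 := mul_le_mul_of_nonneg_left h hN
  linarith

lemma impulse_inner (L : ℕ) (x : Fin L → ℝ) (a : ℝ) :
    ∑ i, x i * impulse L a i = (1 - a) * ∑ i, x i * a ^ (i:ℕ) := by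
  rw [Finset.mul_sum]
  exact Finset.sum_congr rfl fun i _ => by simp only [impulse]; ring

lemma g_lip (L : ℕ) (x : Fin L → ℝ) (a b : ℝ) (ha : a ∈ Set.Icc (0:ℝ) 1)
    (hb : b ∈ Set.Icc (0:ℝ) 1) :
    |(∑ i, x i * impulse L b i) ^ 2 - (∑ i, x i * impulse L a i) ^ 2| ≤
      5 * (∑ i, x i ^ 2) * |b - a| := by
  simp only [impulse_inner]
  have hd : ∀ a ∈ Set.Icc (0:ℝ) 1, HasDerivWithinAt
      (fun a : ℝ => ((1 - a) * ∑ i, x i * a ^ (i:ℕ)) ^ 2)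
      (2 * ((1 - a) * ∑ i, x i * a ^ (i:ℕ)) * (-(∑ i, x i * a ^ (i:ℕ)) +
        (1 - a) * ∑ i, x i * (((i:ℕ):ℝ) * a ^ ((i:ℕ) - 1)))) (Set.Icc 0 1) a := by
    intro a _
    have h1 : HasDerivAt (fun a : ℝ => ∑ i, x i * a ^ (i:ℕ))
        (∑ i, x i * (((i:ℕ):ℝ) * a ^ ((i:ℕ) - 1))) a := by
      apply HasDerivAt.fun_sum
      intro i _
      exact (hasDerivAt_pow _ _).const_mul _
    have h2 : HasDerivAt (fun a : ℝ => 1 - a) (-1) a := (hasDerivAt_id a).const_sub 1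
    have h3 := ((h2.fun_mul h1).fun_pow 2).hasDerivWithinAt (s := Set.Icc 0 1)
    refine h3.congr_deriv ?_
    push_cast; ring
  have := (convex_Icc (0:ℝ) 1).norm_image_sub_le_of_norm_hasDerivWithin_le
    (C := 5 * ∑ i, x i ^ 2) hd ?_ ha hb
  · simpa only [Real.norm_eq_abs] using this
  · rintro a ⟨h0, h1⟩
    have b1 := p_bound L x a h0 h1
    have b2 := dp_bound L x a h0 h1
    set p := ∑ i, x i * a ^ (i:ℕ)
    set q := ∑ i, x i * (((i:ℕ):ℝ) * a ^ ((i:ℕ) - 1))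
    set s := 1 - a
    have hs : 0 ≤ s := by simp only [s]; linarith
    have k1 : 0 ≤ s * (p - s * q) ^ 2 := by positivity
    have k2 : 0 ≤ s * (p + s * q) ^ 2 := by positivity
    have k3 : 0 ≤ s * p ^ 2 := by positivity
    have k4 : 0 ≤ s ^ 3 * q ^ 2 := by positivity
    rw [Real.norm_eq_abs, abs_le]
    constructor <;> nlinarith

lemma int_lower (g : ℝ → ℝ) (hg : Continuous g) (hpos : ∀ a, 0 ≤ g a) (K : ℝ) (hK : 0 < K)
    (hlip : ∀ a ∈ Set.Icc (0:ℝ) 1, ∀ b ∈ Set.Icc (0:ℝ) 1, |g b - g a| ≤ K * |b - a|)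
    (α : ℝ) (hα : α ∈ Set.Icc (0:ℝ) 1) (hGK : g α ≤ K) :
    g α ^ 2 / (4 * K) ≤ ∫ a in (0:ℝ)..1, g a := by
  set G := g α with hG
  have hG0 : 0 ≤ G := hpos α
  set ℓ := G / (2 * K) with hℓ
  have hℓ0 : 0 ≤ ℓ := by positivity
  have hℓ1 : ℓ ≤ 1 / 2 := by rw [hℓ, div_le_iff₀ (by positivity)]; linarith
  have hKℓ : K * ℓ = G / 2 := by rw [hℓ]; field_simp
  have key : ∀ s, 0 ≤ s → s + ℓ ≤ 1 → s ≤ α → α ≤ s + ℓ → G ^ 2 / (4 * K) ≤ ∫ a in (0:ℝ)..1, g a := by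
    intro s hs0 hs1 hsα hαs
    have h1 : ∫ a in s..(s + ℓ), G / 2 ≤ ∫ a in s..(s + ℓ), g a := by
      apply intervalIntegral.integral_mono_on (by linarith) (by simp)
        (hg.intervalIntegrable _ _)
      rintro a ⟨ha0, ha1⟩
      have h := hlip α hα a ⟨by linarith, by linarith⟩
      have h2 : |a - α| ≤ ℓ := by rw [abs_le]; constructor <;> linarith
      have h3 := mul_le_mul_of_nonneg_left h2 hK.le
      have h4 := (abs_le.mp h).1
      linarith
    rw [intervalIntegral.integral_const] at h1
    have h2 : ∫ a in s..(s + ℓ), g a ≤ ∫ a in (0:ℝ)..1, g a :=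
      intervalIntegral.integral_mono_interval hs0 (by linarith) hs1
        (Filter.Eventually.of_forall hpos) (hg.intervalIntegrable _ _)
    refine le_trans (le_of_eq ?_) (h1.trans h2)
    simp only [add_sub_cancel_left, smul_eq_mul, hℓ]
    field_simp
    ring
  rcases le_total α (1 / 2) with h | h
  · exact key α hα.1 (by linarith) le_rfl (by linarith)
  · exact key (α - ℓ) (by linarith) (by linarith [hα.2]) (by linarith) (by linarith)

lemma ortho_bilin {L : ℕ} (v : Fin L → (Fin L → ℝ))
    (ho : ∀ i j : Fin L, (∑ l, v i l * v j l) = if i = j then 1 else 0) (a b : Fin L → ℝ) :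
    ∑ l, (∑ j, a j * v j l) * (∑ j, b j * v j l) = ∑ j, a j * b j := by
  simp only [Finset.sum_mul_sum]
  rw [Finset.sum_comm]
  refine Finset.sum_congr rfl fun i _ => ?_
  rw [Finset.sum_comm]
  have : ∀ j, ∑ l, a i * v i l * (b j * v j l) = a i * b j * if i = j then 1 else 0 := by
    intro j
    rw [← ho, Finset.mul_sum]
    exact Finset.sum_congr rfl fun l _ => by ring
  simp only [this]
  simp

lemma eig_quad {L : ℕ} (lam : Fin L → ℝ) (v : Fin L → (Fin L → ℝ))
    (ho : ∀ i j : Fin L, (∑ l, v i l * v j l) = if i = j then 1 else 0)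
    (he : ∀ j : Fin L, (hankel L).mulVec (v j) = lam j • v j) (a : Fin L → ℝ) :
    ∑ l, (∑ j, a j * v j l) * (hankel L).mulVec (fun l => ∑ j, a j * v j l) l =
      ∑ j, lam j * a j ^ 2 := by
  have h1 : ∀ l, (hankel L).mulVec (fun l => ∑ j, a j * v j l) l =
      ∑ j, (a j * lam j) * v j l := by
    intro l
    have : ∀ j, (a j * lam j) * v j l = a j * ((hankel L).mulVec (v j)) l := by
      intro j; rw [he]; simp; ring
    simp only [this, Matrix.mulVec, dotProduct, Finset.mul_sum]
    rw [Finset.sum_comm]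
    exact Finset.sum_congr rfl fun i _ => Finset.sum_congr rfl fun j _ => by ring
  simp only [h1]
  rw [ortho_bilin v ho]
  exact Finset.sum_congr rfl fun j _ => by ring

lemma complete {L : ℕ} (v : Fin L → (Fin L → ℝ))
    (ho : ∀ i j : Fin L, (∑ l, v i l * v j l) = if i = j then 1 else 0) (w : Fin L → ℝ) (l : Fin L) :
    ∑ j, (∑ l', v j l' * w l') * v j l = w l := by
  have h1 : (Matrix.of v) * (Matrix.of v).transpose = 1 := by
    ext i j
    rw [Matrix.mul_apply, Matrix.one_apply]
    exact ho i j
  have h2 := mul_eq_one_comm.mp h1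
  have h3 := congrFun (congrArg (fun A : Matrix (Fin L) (Fin L) ℝ => A.mulVec w) h2) l
  simp only [Matrix.one_mulVec, ← Matrix.mulVec_mulVec] at h3
  rw [← h3, Matrix.mulVec, dotProduct]
  refine Finset.sum_congr rfl fun j _ => ?_
  simp only [Matrix.transpose_apply, Matrix.of_apply, Matrix.mulVec, dotProduct]
  ring

lemma lam_bound (k r : ℕ) (lam : Fin (k + (r + 1)) → ℝ) (v : Fin (k + (r + 1)) → (Fin (k + (r + 1)) → ℝ))
    (hs : ∀ i j : Fin (k + (r + 1)), i ≤ j → lam j ≤ lam i)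
    (ho : ∀ i j, (∑ l, v i l * v j l) = if i = j then 1 else 0)
    (he : ∀ j, (hankel (k + (r + 1))).mulVec (v j) = lam j • v j)
    (u : ℕ → Fin (k + (r + 1)) → ℝ) (ε : ℝ)
    (hu : ∀ α ∈ Set.Icc (0:ℝ) 1, ∃ c : ℕ → ℝ,
      ∑ i, (impulse (k + (r + 1)) α i - ∑ j ∈ Finset.range k, c j * u j i) ^ 2 ≤ ε ^ 2) :
    lam (Fin.natAdd k 0) ≤ ε ^ 2 := by
  let T : (Fin (k + (r + 1)) → ℝ) →ₗ[ℝ] (Fin k → ℝ) × (Fin r → ℝ) :=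
    { toFun := fun a => (fun i => ∑ l, (∑ j, a j * v j l) * u i l, fun i => a (Fin.natAdd k i.succ))
      map_add' := by
        intro a b
        ext i <;> simp [add_mul, Finset.sum_add_distrib]
      map_smul' := by
        intro c a
        ext i <;> simp [Finset.mul_sum, Finset.sum_mul, mul_assoc] }
  have hker : LinearMap.ker T ≠ ⊥ := LinearMap.ker_ne_bot_of_finrank_lt (by simp)
  obtain ⟨a, haT, ha0⟩ := Submodule.exists_mem_ne_zero_of_ne_bot hker
  rw [LinearMap.mem_ker] at haT
  have hT1 : ∀ i : Fin k, ∑ l, (∑ j, a j * v j l) * u i l = 0 := fun i =>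
    congrFun (congrArg Prod.fst haT) i
  have hT2 : ∀ i : Fin r, a (Fin.natAdd k i.succ) = 0 := fun i =>
    congrFun (congrArg Prod.snd haT) i
  set x : Fin (k + (r + 1)) → ℝ := fun l => ∑ j, a j * v j l with hx
  have hN : ∑ l, x l ^ 2 = ∑ j, a j ^ 2 := by
    have := ortho_bilin v ho a a
    simpa only [sq] using this
  have hNpos : 0 < ∑ j, a j ^ 2 := by
    obtain ⟨j, hj⟩ := Function.ne_iff.mp ha0
    exact Finset.sum_pos' (fun i _ => sq_nonneg _) ⟨j, Finset.mem_univ _, by simp at hj; positivity⟩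
  have hq := eig_quad lam v ho he a
  change ∑ l, x l * (hankel (k + (r + 1))).mulVec x l = _ at hq
  rw [hankel_quad] at hq
  have hlow : lam (Fin.natAdd k 0) * ∑ j, a j ^ 2 ≤ ∑ j, lam j * a j ^ 2 := by
    rw [Finset.mul_sum]
    refine Finset.sum_le_sum fun j _ => ?_
    by_cases hj : (j : ℕ) ≤ k
    · have := hs j (Fin.natAdd k 0) (by rw [Fin.le_def]; simpa using hj)
      gcongr
    · have : a j = 0 := by
        have h := hT2 ⟨j - k - 1, by omega⟩
        convert h
        ext
        simp
        omega
      simp [this]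
  have hup : ∫ α in (0:ℝ)..1, (∑ i, x i * impulse (k + (r + 1)) α i) ^ 2 ≤ ε ^ 2 * ∑ j, a j ^ 2 := by
    have hle : ∫ α in (0:ℝ)..1, (∑ i, x i * impulse (k + (r + 1)) α i) ^ 2 ≤
        ∫ α in (0:ℝ)..1, ε ^ 2 * ∑ j, a j ^ 2 := by
      apply intervalIntegral.integral_mono_on (by norm_num)
        (by apply Continuous.intervalIntegrable; simp only [impulse]; fun_prop) (by simp)
      intro α hα
      obtain ⟨c, hc⟩ := hu α hα
      have h0 : ∑ i, x i * (∑ j ∈ Finset.range k, c j * u j i) = 0 := by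
        simp only [Finset.mul_sum]
        rw [Finset.sum_comm]
        refine Finset.sum_eq_zero fun j hj => ?_
        have := hT1 ⟨j, Finset.mem_range.mp hj⟩
        have h3 : ∑ i, x i * (c j * u j i) = c j * ∑ i, x i * u j i := by
          rw [Finset.mul_sum]; exact Finset.sum_congr rfl fun i _ => by ring
        rw [h3]
        change c j * _ = 0
        rw [mul_eq_zero]; right
        exact this
      have h1 : ∑ i, x i * impulse (k + (r + 1)) α i =
          ∑ i, x i * (impulse (k + (r + 1)) α i - ∑ j ∈ Finset.range k, c j * u j i) := by
        simp only [mul_sub, Finset.sum_sub_distrib]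
        rw [h0, sub_zero]
      rw [h1]
      refine (Finset.sum_mul_sq_le_sq_mul_sq Finset.univ x _).trans ?_
      rw [hN, mul_comm]
      gcongr
    simpa using hle
  rw [hq] at hup
  exact le_of_mul_le_mul_right (hlow.trans hup) hNpos

lemma main_bound (k r : ℕ) (hL : 2000 ≤ k + (r + 1)) (hk : 1 ≤ k) (α : ℝ)
    (hα : α ∈ Set.Icc (0:ℝ) 1)
    (lam : Fin (k + (r + 1)) → ℝ) (v : Fin (k + (r + 1)) → (Fin (k + (r + 1)) → ℝ))
    (hs : ∀ i j : Fin (k + (r + 1)), i ≤ j → lam j ≤ lam i)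
    (ho : ∀ i j, (∑ l, v i l * v j l) = if i = j then 1 else 0)
    (he : ∀ j, (hankel (k + (r + 1))).mulVec (v j) = lam j • v j) :
    ∃ m : Fin k → ℝ, ∑ l, ((∑ i : Fin k, m i * v (Fin.castAdd (r + 1) i) l)
      - impulse (k + (r + 1)) α l) ^ 2 ≤
      5 * (Real.exp 4 * Real.exp (-2 * k / Real.log ((k + (r + 1) : ℕ) : ℝ))) := by
  obtain ⟨u, hu⟩ := approx (k + (r + 1)) k hL hk
  clear hL
  set ε := Real.exp 4 * Real.exp (-2 * k / Real.log ((k + (r + 1) : ℕ) : ℝ)) with hε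
  have hε0 : 0 < ε := by positivity
  have hlam := lam_bound k r lam v hs ho he u ε hu
  set μ := impulse (k + (r + 1)) α with hμ
  set d : Fin (k + (r + 1)) → ℝ := fun j => ∑ l', v j l' * μ l' with hd
  set a : Fin (k + (r + 1)) → ℝ := fun j => if (j:ℕ) < k then 0 else d j with ha
  set x : Fin (k + (r + 1)) → ℝ := fun l => ∑ j, a j * v j l with hx
  set N := ∑ l, x l ^ 2 with hNdef
  have hN : N = ∑ j, a j ^ 2 := by
    have h := ortho_bilin v ho a a
    simp only [← sq] at h
    exact h
  have hres : ∀ l, (∑ i : Fin k, d (Fin.castAdd (r + 1) i) * v (Fin.castAdd (r + 1) i) l) - μ l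
      = - x l := by
    intro l
    rw [← complete v ho μ l]
    simp only [hx, ha]
    rw [Fin.sum_univ_add (a := k) (b := r + 1), Fin.sum_univ_add (a := k) (b := r + 1)]
    simp only [Fin.val_castAdd, Fin.is_lt, if_true, zero_mul, Finset.sum_const_zero, zero_add,
      Fin.val_natAdd, not_lt, Nat.le_add_right, if_false, hd]
    have hnot : ∀ i : Fin (r + 1), ¬ (k + (i:ℕ) < k) := by intro i; omega
    simp only [hnot, if_false]
    ring
  refine ⟨fun i => d (Fin.castAdd (r + 1) i), ?_⟩
  simp only [hres, neg_sq]
  change N ≤ 5 * ε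
  have hN0 : 0 ≤ N := Finset.sum_nonneg fun i _ => sq_nonneg _
  rcases hN0.eq_or_lt with h | hNpos
  · rw [← h]; positivity
  have hinner : ∑ i, x i * μ i = N := by
    have h1 : ∀ i, x i * μ i = (∑ j, a j * v j i) * ∑ j, d j * v j i := by
      intro i; rw [complete v ho μ i]
    simp only [h1]
    rw [ortho_bilin v ho, hN]
    refine Finset.sum_congr rfl fun j _ => ?_
    simp only [ha]; split_ifs <;> ring
  have hN1 : N ≤ 1 := by
    have h1 := p_bound _ x α hα.1 hα.2
    have h2 := impulse_inner _ x α
    rw [hinner] at h2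
    have h3 : N ^ 2 = (1 - α) * ((1 - α) * (∑ i, x i * α ^ (i:ℕ)) ^ 2) := by rw [h2]; ring
    have h4 : N ^ 2 ≤ 1 * N := by
      rw [h3]
      have := hα.1
      have := hα.2
      apply mul_le_mul (by linarith) h1 _ (by norm_num)
      have : 0 ≤ 1 - α := by linarith
      positivity
    nlinarith
  have hq := eig_quad lam v ho he a
  change ∑ l, x l * (hankel (k + (r + 1))).mulVec x l = _ at hq
  rw [hankel_quad] at hq
  have hup : ∑ j, lam j * a j ^ 2 ≤ ε ^ 2 * N := by
    rw [hN, Finset.mul_sum]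
    refine Finset.sum_le_sum fun j _ => ?_
    by_cases hj : (j : ℕ) < k
    · simp [ha, hj]
    · have := hs (Fin.natAdd k 0) j (by rw [Fin.le_def]; simpa using hj)
      have := this.trans hlam
      gcongr
  have hlow := int_lower (fun a => (∑ i, x i * impulse (k + (r + 1)) a i) ^ 2)
    (by simp only [impulse]; fun_prop) (fun a => sq_nonneg _) (5 * N) (by positivity)
    (fun a ha b hb => g_lip _ x a b ha hb) α hα
    (by change (∑ i, x i * μ i) ^ 2 ≤ _; rw [hinner]; nlinarith)
  change ((∑ i, x i * μ i) ^ 2) ^ 2 / _ ≤ _ at hlow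
  rw [hinner, hq] at hlow
  have h5 := hlow.trans hup
  rw [div_le_iff₀ (by positivity)] at h5
  have h6 : N ^ 2 * N ^ 2 ≤ (20 * ε ^ 2) * N ^ 2 := by linarith
  have h7 := le_of_mul_le_mul_right h6 (by positivity)
  apply le_of_sq_le_sq _ (by positivity)
  nlinarith

theorem stmt1 :
    ∃ c : ℝ, 0 < c ∧
      ∀ (L k : ℕ), 2 ≤ L → 1 ≤ k → (hkL : k ≤ L) →
      ∀ α : ℝ, α ∈ Set.Icc (0 : ℝ) 1 →
      ∀ (lam : Fin L → ℝ) (v : Fin L → (Fin L → ℝ)),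
        -- eigenvalues sorted in nonincreasing order
        (∀ i j : Fin L, i ≤ j → lam j ≤ lam i) →
        -- orthonormal family (in particular unit-norm)
        (∀ i j : Fin L, (∑ l, v i l * v j l) = if i = j then 1 else 0) →
        -- eigenvector equation for the Hankel matrix
        (∀ j : Fin L, (hankel L).mulVec (v j) = lam j • v j) →
        -- the spectral filters are the eigenvectors of the k largest eigenvalues
        ∃ m : Fin k → ℝ,
          vecNorm (fun l => (∑ i : Fin k, m i * v (Fin.castLE hkL i) l) - impulse L α l)
            ≤ c * Real.exp (-(k : ℝ) / Real.log L) := by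
  refine ⟨Real.sqrt (5 * Real.exp 4) + Real.exp (2000 / Real.log 2), by positivity, ?_⟩
  intro L k hL hk hkL α hα lam v hs ho he
  have hE := Real.exp_pos (-(k : ℝ) / Real.log L)
  by_cases hbig : 2000 ≤ L
  · obtain ⟨r, rfl⟩ := Nat.exists_eq_add_of_le hkL
    cases r with
    | zero =>
      refine ⟨fun i => ∑ l', v (Fin.castLE hkL i) l' * impulse (k + 0) α l', ?_⟩
      have : ∀ l, (∑ i : Fin k, (∑ l', v (Fin.castLE hkL i) l' * impulse (k + 0) α l') *
          v (Fin.castLE hkL i) l) - impulse (k + 0) α l = 0 := by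
        intro l
        rw [sub_eq_zero]
        exact complete v ho (impulse (k + 0) α) l
      simp only [this, vecNorm]
      simp
      positivity
    | succ r =>
      obtain ⟨m, hm⟩ := main_bound k r hbig hk α hα lam v hs ho he
      refine ⟨m, ?_⟩
      have h1 : vecNorm (fun l => (∑ i : Fin k, m i * v (Fin.castLE hkL i) l)
          - impulse (k + (r + 1)) α l) ≤ Real.sqrt (5 * Real.exp 4) *
            Real.exp (-(k : ℝ) / Real.log ((k + (r + 1) : ℕ) : ℝ)) := by
        rw [vecNorm]
        apply Real.sqrt_le_iff.mpr
        refine ⟨by positivity, hm.trans (le_of_eq ?_)⟩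
        rw [mul_pow, Real.sq_sqrt (by positivity), ← Real.exp_nat_mul]
        rw [mul_assoc]
        congr 3
        push_cast; ring
      refine h1.trans ?_
      gcongr
      have := Real.exp_pos (2000 / Real.log 2)
      linarith
  · push Not at hbig
    refine ⟨0, ?_⟩
    have h1 : vecNorm (fun l => (∑ i : Fin k, (0 : Fin k → ℝ) i * v (Fin.castLE hkL i) l)
        - impulse L α l) ≤ 1 := by
      rw [vecNorm, Real.sqrt_le_iff]
      refine ⟨by norm_num, ?_⟩
      simp only [Pi.zero_apply, zero_mul, Finset.sum_const_zero, zero_sub, neg_sq, impulse, mul_pow]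
      have h := sq_geom_bound' α hα.1 hα.2 L
      rw [Finset.sum_range] at h
      rw [← Finset.mul_sum]
      have := hα.1
      have := hα.2
      nlinarith
    refine h1.trans ?_
    have hlog2 : 0 < Real.log 2 := Real.log_pos (by norm_num)
    have hlog : Real.log 2 ≤ Real.log L := Real.log_le_log (by norm_num) (by exact_mod_cast hL)
    have hkk : (k:ℝ) ≤ 2000 := by exact_mod_cast (by omega : k ≤ 2000)
    have h2 : (k:ℝ) / Real.log L ≤ 2000 / Real.log 2 := by gcongr
    have h3 : 1 ≤ Real.exp (2000 / Real.log 2) * Real.exp (-(k : ℝ) / Real.log L) := by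
      rw [← Real.exp_add]
      apply Real.one_le_exp
      rw [neg_div]; linarith
    have h4 := mul_nonneg (Real.sqrt_nonneg (5 * Real.exp 4)) hE.le
    linarith
end

section
/- Let L be a positive integer and let P ∈ ℝ^{L×L} be an orthogonal projection (i.e., P = Pᵀ and P² = P). Then ∫_0^1 ‖μ_L(α) − P·μ_L(α)‖₂² dα = tr((I_L − P)·Z_L). -/
theorem impulse_integral (L : ℕ) (i j : Fin L) :
    (∫ α in (0:ℝ)..1, impulse L α j * impulse L α i) = hankel L j i := by
  have h : ∀ α : ℝ, impulse L α j * impulse L α i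
      = α ^ ((j : ℕ) + i) - 2 * α ^ ((j : ℕ) + i + 1) + α ^ ((j : ℕ) + i + 2) := by
    intro α
    simp only [impulse]
    ring
  simp_rw [h]
  rw [intervalIntegral.integral_add (Continuous.intervalIntegrable (by fun_prop) _ _)
    (Continuous.intervalIntegrable (by fun_prop) _ _),
    intervalIntegral.integral_sub (Continuous.intervalIntegrable (by fun_prop) _ _)
    (Continuous.intervalIntegrable (by fun_prop) _ _),
    intervalIntegral.integral_const_mul, integral_pow, integral_pow, integral_pow]
  simp only [hankel]
  generalize (j : ℕ) + (i : ℕ) = n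
  have hn : (0 : ℝ) ≤ n := Nat.cast_nonneg n
  push_cast
  have e : ((n : ℝ) + 2) ^ 3 - (n + 2) = (n + 1) * (n + 2) * (n + 3) := by ring
  rw [e]
  have h1 : (n : ℝ) + 1 + 1 = n + 2 := by ring
  have h2 : (n : ℝ) + 2 + 1 = n + 3 := by ring
  rw [h1, h2]
  simp only [one_pow, ne_eq, Nat.add_eq_zero_iff, one_ne_zero, and_false, not_false_eq_true,
    zero_pow, sub_zero]
  field_simp
  ring

open Matrix in
theorem residual_quad (L : ℕ) (P : Matrix (Fin L) (Fin L) ℝ)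
    (hsymm : Pᵀ = P) (hidem : P * P = P) (v : Fin L → ℝ) :
    ∑ i, (v i - P.mulVec v i) ^ 2 = ∑ i, ∑ j, (1 - P) i j * (v j * v i) := by
  have hQ : (1 - P)ᵀ * (1 - P) = 1 - P := by
    rw [transpose_sub, transpose_one, hsymm, sub_mul, mul_sub, mul_sub, hidem]
    simp
  have h1 : ∑ i, (v i - P.mulVec v i) ^ 2 = ((1 - P) *ᵥ v) ⬝ᵥ ((1 - P) *ᵥ v) := by
    simp [dotProduct, sub_mulVec, pow_two]
  rw [h1, dotProduct_mulVec, ← mulVec_transpose, mulVec_mulVec, hQ]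
  simp only [dotProduct, mulVec, Finset.sum_mul, mul_assoc]

open Matrix in
theorem stmt5 (L : ℕ) (hL : 0 < L) (P : Matrix (Fin L) (Fin L) ℝ)
    (hsymm : Pᵀ = P) (hidem : P * P = P) :
    (∫ α in (0:ℝ)..1, ∑ i, (impulse L α i - P.mulVec (impulse L α) i) ^ 2)
      = Matrix.trace ((1 - P) * hankel L) := by
  simp_rw [residual_quad L P hsymm hidem]
  have hc : ∀ i : Fin L, Continuous fun α => impulse L α i := by
    intro i
    unfold impulse
    fun_prop
  rw [intervalIntegral.integral_finsetSum
    (fun i _ => Continuous.intervalIntegrable (by fun_prop) _ _)]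
  simp only [Matrix.trace, Matrix.diag, Matrix.mul_apply]
  refine Finset.sum_congr rfl fun i _ => ?_
  rw [intervalIntegral.integral_finsetSum
    (fun i _ => Continuous.intervalIntegrable (by fun_prop) _ _)]
  refine Finset.sum_congr rfl fun j _ => ?_
  rw [intervalIntegral.integral_const_mul, impulse_integral]
end
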